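/- arXiv:2301.06457 — 6 statements merged into one kernel-verified Lean document; each statement's English description precedes it below -/
import Mathlib

section
/- Let H be a finite simple bipartite graph, let v₀ be a vertex of H, and for each integer d ≥ 0 let V_d be the set of vertices of H at graph distance exactly d from v₀. If H has a perfect matching, then for every perfect matching M of H and every d ≥ 0, the number of edges of M with one endpoint in V_d and the other endpoint in V_{d+1} is exactly S_d := Σ_{i=0}^{d} (−1)^i · |V_{d−i}|. -/
/-!
Every edge of `H` joins vertices whose distances from `v₀` differ by at most one, and in a bipartite
graph by exactly one, since walks from `v₀` to adjacent vertices have lengths of different parity.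
So a perfect matching pairs each vertex of `V_{d+1}` with a vertex of `V_d` or of `V_{d+2}`, and
`v₀` with a vertex of `V_1`. Writing `m_d` for the number of matching edges between `V_d` and
`V_{d+1}`, this says `|V_0| = m_0` and `|V_{d+1}| = m_d + m_{d+1}`, a recursion that the
alternating sum solves.
-/

theorem eq_sum_range_neg_one_pow_mul_of_succ_eq_add {R : Type*} [Ring R] {a m : ℕ → R} {d : ℕ}
    (zero : a 0 = m 0) (succ : ∀ k < d, a (k + 1) = m k + m (k + 1)) :
    m d = ∑ i ∈ Finset.range (d + 1), (-1) ^ i * a (d - i) := by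
  induction d with
  | zero => simp [zero]
  | succ d ih =>
    calc m (d + 1) = -m d + a (d + 1) := by rw [succ d d.lt_succ_self, neg_add_cancel_left]
      _ = -(∑ i ∈ Finset.range (d + 1), (-1) ^ i * a (d - i)) + a (d + 1) := by
        rw [ih fun k hk ↦ succ k (hk.trans d.lt_succ_self)]
      _ = ∑ i ∈ Finset.range (d + 1 + 1), (-1) ^ i * a (d + 1 - i) := by
        simp [Finset.sum_range_succ' _ (d + 1), pow_succ]

section

variable {V : Type*} {G : SimpleGraph V} {M : G.Subgraph} {A B C : Set V}

/-- The edges of `M` with one endpoint in `A` and the other in `B`, as unordered pairs. -/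
def edgesBetween (M : G.Subgraph) (A B : Set V) : Set (Sym2 V) :=
  {e | e ∈ M.edgeSet ∧ ∃ u v : V, e = s(u, v) ∧ u ∈ A ∧ v ∈ B}

/-- The vertices of `A` with an `M`-neighbour in `B`. When `M` is a matching and `A`, `B` are
disjoint, these are in bijection with `edgesBetween M A B`. -/
def matchedInto (M : G.Subgraph) (A B : Set V) : Set V :=
  {a ∈ A | ∃ b ∈ B, M.Adj a b}

theorem edgesBetween_comm (M : G.Subgraph) (A B : Set V) :
    edgesBetween M A B = edgesBetween M B A := by
  ext e
  constructor <;> rintro ⟨he, u, v, rfl, hu, hv⟩ <;> exact ⟨he, v, u, Sym2.eq_swap, hv, hu⟩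

theorem ncard_matchedInto (hM : M.IsMatching) (hAB : Disjoint A B) :
    (matchedInto M A B).ncard = (edgesBetween M A B).ncard := by
  choose partner partner_mem adj_partner using fun a (ha : a ∈ matchedInto M A B) ↦ ha.2
  refine Set.ncard_congr (fun a ha ↦ s(a, partner a ha)) ?mem ?inj ?surj
  case mem =>
    exact fun a ha ↦ ⟨adj_partner a ha, a, partner a ha, rfl, ha.1, partner_mem a ha⟩
  case inj =>
    intro a a' ha ha' h
    rcases Sym2.eq_iff.mp h with ⟨h, -⟩ | ⟨h, -⟩
    · exact h
    · exact absurd (h ▸ partner_mem a' ha') (hAB.notMem_of_mem_left ha.1)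
  case surj =>
    rintro _ ⟨huv, u, v, rfl, hu, hv⟩
    have hu' : u ∈ matchedInto M A B := ⟨hu, v, hv, huv⟩
    exact ⟨u, hu', congrArg (s(u, ·)) (hM.eq_of_adj_left (adj_partner u hu') huv)⟩

theorem disjoint_matchedInto (hM : M.IsMatching) (hBC : Disjoint B C) :
    Disjoint (matchedInto M A B) (matchedInto M A C) := by
  refine Set.disjoint_left.mpr ?_
  rintro a ⟨-, b, hb, hab⟩ ⟨-, c, hc, hac⟩
  exact hBC.ne_of_mem hb hc (hM.eq_of_adj_left hab hac)

theorem ncard_eq_ncard_edgesBetween_add (hM : M.IsMatching) (hA : A.Finite)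
    (hAB : Disjoint A B) (hAC : Disjoint A C) (hBC : Disjoint B C)
    (hmatched : ∀ a ∈ A, ∃ b ∈ B ∪ C, M.Adj a b) :
    A.ncard = (edgesBetween M A B).ncard + (edgesBetween M A C).ncard := by
  have hsub (D : Set V) : matchedInto M A D ⊆ A := Set.sep_subset _ _
  have hunion : A = matchedInto M A B ∪ matchedInto M A C := by
    refine Set.Subset.antisymm (fun a ha ↦ ?_) (Set.union_subset (hsub B) (hsub C))
    obtain ⟨b, hb | hb, hab⟩ := hmatched a ha
    · exact .inl ⟨ha, b, hb, hab⟩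
    · exact .inr ⟨ha, b, hb, hab⟩
  calc A.ncard = (matchedInto M A B ∪ matchedInto M A C).ncard := congrArg Set.ncard hunion
    _ = (matchedInto M A B).ncard + (matchedInto M A C).ncard :=
      Set.ncard_union_eq (disjoint_matchedInto hM hBC) (hA.subset (hsub B)) (hA.subset (hsub C))
    _ = (edgesBetween M A B).ncard + (edgesBetween M A C).ncard := by
      rw [ncard_matchedInto hM hAB, ncard_matchedInto hM hAC]

/-- The set `V_d` of vertices at distance exactly `d` from `v₀`. Reachability is required because
`SimpleGraph.dist` is `0` between different components. -/
def distLayer (G : SimpleGraph V) (v₀ : V) (d : ℕ) : Set V :=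
  {v | G.Reachable v₀ v ∧ G.dist v₀ v = d}

variable {v₀ u v : V} {d i j : ℕ}

theorem disjoint_distLayer (hij : i ≠ j) : Disjoint (distLayer G v₀ i) (distLayer G v₀ j) :=
  Set.disjoint_left.mpr fun _ hi hj ↦ hij (hi.2.symm.trans hj.2)

theorem dist_ne_dist_of_adj (hG : G.Colorable 2) (hu : G.Reachable v₀ u) (huv : G.Adj u v) :
    G.dist v₀ u ≠ G.dist v₀ v := by
  intro hdist
  let c : G.Coloring Bool := hG.toColoring (by simp)
  obtain ⟨p, hp⟩ := hu.exists_walk_length_eq_dist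
  obtain ⟨q, hq⟩ := (hu.trans huv.reachable).exists_walk_length_eq_dist
  have hcolor : (c v₀ ↔ c u) ↔ (c v₀ ↔ c v) := by
    rw [← c.even_length_iff_congr p, ← c.even_length_iff_congr q, hp, hq, hdist]
  exact c.valid huv (Bool.eq_iff_iff.mpr (by tauto))

theorem edgesBetween_distLayer_self (hG : G.Colorable 2) (M : G.Subgraph) (v₀ : V) (d : ℕ) :
    edgesBetween M (distLayer G v₀ d) (distLayer G v₀ d) = ∅ := by
  refine Set.eq_empty_of_forall_notMem ?_
  rintro _ ⟨huv, u, v, rfl, hu, hv⟩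
  exact dist_ne_dist_of_adj hG hu.1 (M.adj_sub huv) (hu.2.trans hv.2.symm)

theorem exists_adj_mem_distLayer_union (hM : M.IsMatching)
    (hcover : distLayer G v₀ (d + 1) ⊆ M.verts)
    (hself : edgesBetween M (distLayer G v₀ (d + 1)) (distLayer G v₀ (d + 1)) = ∅)
    (hu : u ∈ distLayer G v₀ (d + 1)) :
    ∃ v ∈ distLayer G v₀ d ∪ distLayer G v₀ (d + 2), M.Adj u v := by
  obtain ⟨v, huv, -⟩ := hM (hcover hu)
  have hv : G.Reachable v₀ v := hu.1.trans huv.adj_sub.reachable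
  have hdist := huv.adj_sub.diff_dist_adj (u := v₀)
  rw [hu.2] at hdist
  rcases hdist with same | above | below
  · exact absurd ⟨huv, u, v, rfl, hu, hv, same⟩
      (Set.eq_empty_iff_forall_notMem.mp hself s(u, v))
  · exact ⟨v, .inr ⟨hv, above⟩, huv⟩
  · exact ⟨v, .inl ⟨hv, below⟩, huv⟩

theorem ncard_distLayer_zero (hM : M.IsMatching) (hcover : distLayer G v₀ 0 ⊆ M.verts) :
    (distLayer G v₀ 0).ncard = (edgesBetween M (distLayer G v₀ 0) (distLayer G v₀ 1)).ncard := by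
  rw [← ncard_matchedInto hM (disjoint_distLayer zero_ne_one)]
  congr 1
  refine Set.Subset.antisymm (fun u hu ↦ ?_) (Set.sep_subset _ _)
  obtain rfl : v₀ = u := hu.1.dist_eq_zero_iff.mp hu.2
  obtain ⟨v, huv, -⟩ := hM (hcover hu)
  have hadj : G.Adj v₀ v := huv.adj_sub
  exact ⟨hu, v, ⟨hadj.reachable, SimpleGraph.dist_eq_one_iff_adj.mpr hadj⟩, huv⟩

theorem ncard_distLayer_succ (hM : M.IsMatching) (hfin : (distLayer G v₀ (d + 1)).Finite)
    (hcover : distLayer G v₀ (d + 1) ⊆ M.verts)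
    (hself : edgesBetween M (distLayer G v₀ (d + 1)) (distLayer G v₀ (d + 1)) = ∅) :
    (distLayer G v₀ (d + 1)).ncard =
      (edgesBetween M (distLayer G v₀ d) (distLayer G v₀ (d + 1))).ncard +
        (edgesBetween M (distLayer G v₀ (d + 1)) (distLayer G v₀ (d + 2))).ncard := by
  rw [edgesBetween_comm M (distLayer G v₀ d)]
  exact ncard_eq_ncard_edgesBetween_add hM hfin (disjoint_distLayer (by omega))
    (disjoint_distLayer (by omega)) (disjoint_distLayer (by omega))
    fun _ ↦ exists_adj_mem_distLayer_union hM hcover hself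

theorem stmt0_general (hM : M.IsMatching)
    (hfin : ∀ i ≤ d, (distLayer G v₀ i).Finite)
    (hcover : ∀ i ≤ d, distLayer G v₀ i ⊆ M.verts)
    (hself : ∀ i ≤ d, edgesBetween M (distLayer G v₀ i) (distLayer G v₀ i) = ∅) :
    ((edgesBetween M (distLayer G v₀ d) (distLayer G v₀ (d + 1))).ncard : ℤ) =
      ∑ i ∈ Finset.range (d + 1), (-1 : ℤ) ^ i * ((distLayer G v₀ (d - i)).ncard : ℤ) := by
  refine eq_sum_range_neg_one_pow_mul_of_succ_eq_add
    (a := fun k ↦ ((distLayer G v₀ k).ncard : ℤ))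
    (m := fun k ↦ ((edgesBetween M (distLayer G v₀ k) (distLayer G v₀ (k + 1))).ncard : ℤ)) ?_ ?_
  · exact_mod_cast ncard_distLayer_zero hM (hcover 0 d.zero_le)
  · intro k hk
    exact_mod_cast ncard_distLayer_succ hM (hfin _ hk) (hcover _ hk) (hself _ hk)

end

/-- In a finite simple bipartite graph `H` with a distinguished
vertex `v₀`, for any perfect matching `M` of `H` and any `d ≥ 0`, the number of
matching edges between `V_d` (vertices at distance exactly `d` from `v₀`) and
`V_{d+1}` equals `S_d = Σ_{i=0}^{d} (-1)^i |V_{d-i}|`. -/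
theorem stmt0 {V : Type*} [Fintype V] (H : SimpleGraph V) (hbip : H.Colorable 2)
    (v₀ : V) (M : H.Subgraph) (hM : M.IsPerfectMatching) (d : ℕ) :
    (Set.ncard {e : Sym2 V | e ∈ M.edgeSet ∧ ∃ u v : V, e = s(u, v) ∧
        (H.Reachable v₀ u ∧ H.dist v₀ u = d) ∧
        (H.Reachable v₀ v ∧ H.dist v₀ v = d + 1)} : ℤ) =
      ∑ i ∈ Finset.range (d + 1),
        (-1 : ℤ) ^ i *
          (Set.ncard {v : V | H.Reachable v₀ v ∧ H.dist v₀ v = d - i} : ℤ) :=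
  stmt0_general hM.1 (fun _ _ ↦ Set.toFinite _) (fun _ _ v _ ↦ hM.2 v)
    fun i _ ↦ edgesBetween_distLayer_self hbip M v₀ i
end

section
/- Let G be a graph with a partial (Δ+1)-coloring, let C be a set of vertices of G, and let M be a colorful matching in C. Then the clique palette satisfies |Ψ_C| ≥ (Δ+1) − |Č| + |M|, where Č is the set of colored vertices of C. -/
/-!
Deleting the second vertex of every matched pair from the colored vertices of `C` loses no color,
because its partner stays behind with the same color. Hence at most `|Č| - |M|` colors are used on
`C`, and all the others lie in the palette.
-/

theorem card_image_add_card_le_card_of_exists_mem_sdiff {α β : Type*} [DecidableEq α]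
    [DecidableEq β] {g : α → β} {s t : Finset α} (hts : t ⊆ s)
    (hg : ∀ b ∈ t, ∃ a ∈ s \ t, g a = g b) : (s.image g).card + t.card ≤ s.card := by
  have himage : s.image g ⊆ (s \ t).image g := by
    refine Finset.image_subset_iff.2 fun b hb ↦ Finset.mem_image.2 ?_
    by_cases hbt : b ∈ t
    · exact hg b hbt
    · exact ⟨b, Finset.mem_sdiff.2 ⟨hb, hbt⟩, rfl⟩
  calc (s.image g).card + t.card
      ≤ (s \ t).card + t.card := by grw [himage, Finset.card_image_le]
    _ = s.card := Finset.card_sdiff_add_card_eq_card hts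

section PartialColoring

variable {V α : Type*} {f : V → Option α} {C : Finset V} {M : Finset (V × V)}

/-- The set `Č` of vertices of `C` that are colored by the partial coloring `f`, where
`f v = none` means that `v` is uncolored. -/
def coloredVertices (f : V → Option α) (C : Finset V) : Finset V :=
  C.filter fun v ↦ f v ≠ none

/-- The clique palette `Ψ_C`: the colors that the partial coloring `f` uses on no vertex of `C`. -/
def cliquePalette (f : V → Option α) (C : Finset V) : Set α :=
  {c | ∀ v ∈ C, f v ≠ some c}

/-- `M` is a set of pairwise disjoint pairs of distinct vertices of `C`, both vertices of a pair
having the same color; for a proper coloring, the colorful matchings are those `M` whose pairs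
moreover have distinct colors. Each pair is listed in one (arbitrary) order. -/
structure IsMonochromaticMatching (f : V → Option α) (C : Finset V) (M : Finset (V × V)) :
    Prop where
  ne : ∀ p ∈ M, p.1 ≠ p.2
  fst_mem : ∀ p ∈ M, p.1 ∈ C
  snd_mem : ∀ p ∈ M, p.2 ∈ C
  exists_color : ∀ p ∈ M, ∃ c, f p.1 = some c ∧ f p.2 = some c
  disjoint : ∀ p ∈ M, ∀ q ∈ M, p ≠ q → p.1 ≠ q.1 ∧ p.1 ≠ q.2 ∧ p.2 ≠ q.1 ∧ p.2 ≠ q.2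

theorem mem_coloredVertices_of_eq_some {v : V} {c : α} (hv : v ∈ C) (hc : f v = some c) :
    v ∈ coloredVertices f C :=
  Finset.mem_filter.2 ⟨hv, by simp [hc]⟩

theorem image_coloredVertices [DecidableEq α] :
    (coloredVertices f C).image f = (C.image f).eraseNone.map .some := by
  rw [Finset.map_some_eraseNone]
  ext o
  simp only [coloredVertices, Finset.mem_image, Finset.mem_filter, Finset.mem_erase]
  grind

theorem cliquePalette_eq_compl_eraseNone_image [DecidableEq α] :
    cliquePalette f C = (↑(C.image f).eraseNone)ᶜ := by
  ext c
  simp [cliquePalette]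

theorem ncard_cliquePalette_add_card_image_coloredVertices [Fintype α] [DecidableEq α] :
    (cliquePalette f C).ncard + ((coloredVertices f C).image f).card = Fintype.card α := by
  rw [image_coloredVertices, Finset.card_map, cliquePalette_eq_compl_eraseNone_image,
    ← Finset.coe_compl, Set.ncard_coe_finset, Finset.card_compl_add_card]

namespace IsMonochromaticMatching

theorem fst_ne_snd (hM : IsMonochromaticMatching f C M) {p q : V × V} (hp : p ∈ M) (hq : q ∈ M) :
    p.1 ≠ q.2 := by
  obtain rfl | hpq := eq_or_ne p q
  · exact hM.ne p hp
  · exact (hM.disjoint p hp q hq hpq).2.1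

theorem injOn_snd (hM : IsMonochromaticMatching f C M) : Set.InjOn Prod.snd (M : Set (V × V)) :=
  fun p hp q hq hsnd ↦ by_contra fun hpq ↦ (hM.disjoint p hp q hq hpq).2.2.2 hsnd

theorem card_image_coloredVertices_add_card_le [DecidableEq α]
    (hM : IsMonochromaticMatching f C M) :
    ((coloredVertices f C).image f).card + M.card ≤ (coloredVertices f C).card := by
  classical
  rw [← Finset.card_image_of_injOn hM.injOn_snd]
  apply card_image_add_card_le_card_of_exists_mem_sdiff
  · refine Finset.image_subset_iff.2 fun p hp ↦ ?_
    obtain ⟨c, -, hsnd⟩ := hM.exists_color p hp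
    exact mem_coloredVertices_of_eq_some (hM.snd_mem p hp) hsnd
  · refine Finset.forall_mem_image.2 fun p hp ↦ ?_
    obtain ⟨c, hfst, hsnd⟩ := hM.exists_color p hp
    have hfst_notMem : p.1 ∉ M.image Prod.snd := fun hmem ↦ by
      obtain ⟨q, hq, hqp⟩ := Finset.mem_image.1 hmem
      exact hM.fst_ne_snd hp hq hqp.symm
    exact ⟨p.1, Finset.mem_sdiff.2
      ⟨mem_coloredVertices_of_eq_some (hM.fst_mem p hp) hfst, hfst_notMem⟩, hfst.trans hsnd.symm⟩

end IsMonochromaticMatching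

theorem stmt1_general [Fintype α] (hM : IsMonochromaticMatching f C M) :
    (Fintype.card α : ℤ) - (coloredVertices f C).card + M.card ≤ (cliquePalette f C).ncard := by
  classical
  have hpalette := ncard_cliquePalette_add_card_image_coloredVertices (f := f) (C := C)
  have hused := hM.card_image_coloredVertices_add_card_le
  lia

end PartialColoring

/-- For a graph `G` with a partial `(Δ+1)`-coloring `f`, a vertex
set `C`, and a colorful matching `M` in `C`, the clique palette `Ψ_C` (the colors
used by no vertex of `C`) satisfies `|Ψ_C| ≥ (Δ+1) - |Č| + |M|`, where `Č` is the
set of colored vertices of `C`. -/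
theorem stmt1 {V : Type*} [Fintype V] [DecidableEq V] (G : SimpleGraph V) (Δ : ℕ)
    (f : V → Option (Fin (Δ + 1)))
    (hf : ∀ u v, G.Adj u v → ∀ c, f u = some c → f v ≠ some c)
    (C : Finset V) (M : Finset (V × V))
    (hM : ∀ p ∈ M, p.1 ≠ p.2 ∧ ¬ G.Adj p.1 p.2 ∧ p.1 ∈ C ∧ p.2 ∈ C ∧
      ∃ c, f p.1 = some c ∧ f p.2 = some c)
    (hdisj : ∀ p ∈ M, ∀ q ∈ M, p ≠ q →
      p.1 ≠ q.1 ∧ p.1 ≠ q.2 ∧ p.2 ≠ q.1 ∧ p.2 ≠ q.2)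
    (hcol : ∀ p ∈ M, ∀ q ∈ M, p ≠ q → f p.1 ≠ f q.1) :
    ((Δ : ℤ) + 1) - ((C.filter (fun v => f v ≠ none)).card : ℤ) + (M.card : ℤ) ≤
      (Set.ncard {c : Fin (Δ + 1) | ∀ v ∈ C, f v ≠ some c} : ℤ) := by
  have hmatching : IsMonochromaticMatching f C M :=
    ⟨fun p hp ↦ (hM p hp).1, fun p hp ↦ (hM p hp).2.2.1, fun p hp ↦ (hM p hp).2.2.2.1,
      fun p hp ↦ (hM p hp).2.2.2.2, hdisj⟩
  simpa [coloredVertices, cliquePalette] using stmt1_general hmatching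
end

section
/- Let G be a graph of maximum degree at most Δ with a partial (Δ+1)-coloring, let C be a set of vertices of G, and let M be a colorful matching in C. If a vertex v ∈ C is promising, i.e. its anti-degree satisfies a_v ≤ |M|, then |Ψ_C ∩ Ψ_v| ≥ |Ĉ|, where Ĉ is the set of uncolored vertices of C. -/
/-!
Put `W = C ∪ N(v)`. Each pair of the matching repeats a color, so deleting its first endpoint from
`W` loses no color, and uncolored vertices contribute none. Hence at most `|W| - |M| - |Ŵ|` colors
occur on `W`, while `|W| = a_v + deg v ≤ |M| + Δ`. So more than `|Ŵ| ≥ |Ĉ|` of the `Δ + 1` colors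
are missing from `W`, that is, belong to `Ψ_C ∩ Ψ_v`.
-/

open Finset

section PartialColoring

variable {V α : Type*}

/-- `M` is a set of pairwise disjoint pairs of distinct vertices of `W` whose two endpoints share a
color. A colorful matching is such an `M` whose pairs are moreover non-adjacent and use
distinct colors. Pairs are encoded as ordered pairs. -/
structure IsMonochromaticMatching_s2 (f : V → Option α) (W : Finset V) (M : Finset (V × V)) :
    Prop where
  fst_ne_snd : ∀ p ∈ M, p.1 ≠ p.2
  fst_mem : ∀ p ∈ M, p.1 ∈ W
  snd_mem : ∀ p ∈ M, p.2 ∈ W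
  exists_color : ∀ p ∈ M, ∃ c, f p.1 = some c ∧ f p.2 = some c
  disjoint : ∀ p ∈ M, ∀ q ∈ M, p ≠ q → p.1 ≠ q.1 ∧ p.1 ≠ q.2 ∧ p.2 ≠ q.1 ∧ p.2 ≠ q.2

variable {f : V → Option α} {W W' : Finset V} {M : Finset (V × V)}

namespace IsMonochromaticMatching_s2

theorem mono (hM : IsMonochromaticMatching_s2 f W M) (hW : W ⊆ W') :
    IsMonochromaticMatching_s2 f W' M :=
  { hM with
    fst_mem := fun p hp => hW (hM.fst_mem p hp)
    snd_mem := fun p hp => hW (hM.snd_mem p hp) }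

variable [DecidableEq V]

theorem image_fst_subset (hM : IsMonochromaticMatching_s2 f W M) : M.image Prod.fst ⊆ W :=
  image_subset_iff.2 hM.fst_mem

theorem card_image_fst (hM : IsMonochromaticMatching_s2 f W M) : #(M.image Prod.fst) = #M :=
  card_image_of_injOn fun p hp q hq hpq =>
    by_contra fun hne => (hM.disjoint p hp q hq hne).1 hpq

theorem snd_notMem_image_fst (hM : IsMonochromaticMatching_s2 f W M) {p : V × V} (hp : p ∈ M) :
    p.2 ∉ M.image Prod.fst := by
  intro hmem
  obtain ⟨q, hq, hqp⟩ := mem_image.1 hmem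
  obtain rfl | hne := eq_or_ne p q
  · exact hM.fst_ne_snd p hp hqp
  · exact (hM.disjoint p hp q hq hne).2.2.1 hqp.symm

theorem uncolored_subset_uncolored_sdiff (hM : IsMonochromaticMatching_s2 f W M) :
    {u ∈ W | f u = none} ⊆ {u ∈ W \ M.image Prod.fst | f u = none} := by
  intro u hu
  obtain ⟨huW, hnone⟩ := mem_filter.1 hu
  refine mem_filter.2 ⟨mem_sdiff.2 ⟨huW, fun hfst => ?_⟩, hnone⟩
  obtain ⟨p, hp, rfl⟩ := mem_image.1 hfst
  obtain ⟨c, hc, -⟩ := hM.exists_color p hp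
  exact Option.some_ne_none c (hc.symm.trans hnone)

end IsMonochromaticMatching_s2

variable [DecidableEq α]

/-- The set of colors that the partial coloring `f` uses on `W`, where `f u = none` means that `u`
is uncolored; the palette of `W` is its complement. -/
def usedColors (f : V → Option α) (W : Finset V) : Finset α :=
  (W.image f).eraseNone

theorem mem_usedColors {c : α} : c ∈ usedColors f W ↔ ∃ u ∈ W, f u = some c := by
  simp only [usedColors, mem_eraseNone, mem_image]

theorem card_usedColors_add_card_uncolored_le (f : V → Option α) (W : Finset V) :
    #(usedColors f W) + #{u ∈ W | f u = none} ≤ #W := by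
  have used_subset : (usedColors f W).map .some ⊆ {u ∈ W | f u ≠ none}.image f := by
    intro o ho
    obtain ⟨c, hc, rfl⟩ := mem_map.1 ho
    obtain ⟨u, hu, huc⟩ := mem_usedColors.1 hc
    exact mem_image.2 ⟨u, by simp [hu, huc], huc⟩
  have used_le : #(usedColors f W) ≤ #{u ∈ W | f u ≠ none} := by
    simpa only [card_map] using (card_le_card used_subset).trans card_image_le
  have split := card_filter_add_card_filter_not (s := W) (fun u => f u = none)
  lia

theorem IsMonochromaticMatching_s2.usedColors_subset_usedColors_sdiff [DecidableEq V]
    (hM : IsMonochromaticMatching_s2 f W M) :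
    usedColors f W ⊆ usedColors f (W \ M.image Prod.fst) := by
  intro c hc
  obtain ⟨u, hu, huc⟩ := mem_usedColors.1 hc
  refine mem_usedColors.2 ?_
  by_cases hfst : u ∈ M.image Prod.fst
  · obtain ⟨p, hp, rfl⟩ := mem_image.1 hfst
    obtain ⟨d, hd₁, hd₂⟩ := hM.exists_color p hp
    exact ⟨p.2, mem_sdiff.2 ⟨hM.snd_mem p hp, hM.snd_notMem_image_fst hp⟩,
      hd₂.trans (hd₁.symm.trans huc)⟩
  · exact ⟨u, mem_sdiff.2 ⟨hu, hfst⟩, huc⟩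

theorem IsMonochromaticMatching_s2.card_usedColors_add_card_uncolored_add_card_le
    (hM : IsMonochromaticMatching_s2 f W M) :
    #(usedColors f W) + #{u ∈ W | f u = none} + #M ≤ #W := by
  classical
  calc #(usedColors f W) + #{u ∈ W | f u = none} + #M
    _ ≤ #(usedColors f (W \ M.image Prod.fst)) + #{u ∈ W \ M.image Prod.fst | f u = none}
          + #(M.image Prod.fst) := by
      rw [hM.card_image_fst]
      exact Nat.add_le_add_right (Nat.add_le_add
        (card_le_card hM.usedColors_subset_usedColors_sdiff)
        (card_le_card hM.uncolored_subset_uncolored_sdiff)) _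
    _ ≤ #(W \ M.image Prod.fst) + #(M.image Prod.fst) := by
      gcongr
      exact card_usedColors_add_card_uncolored_le f _
    _ = #W := card_sdiff_add_card_eq_card hM.image_fst_subset

end PartialColoring

section Neighborhood

variable {V α : Type*} [DecidableEq V] (G : SimpleGraph V) (v : V) [Fintype (G.neighborSet v)]
  (C : Finset V)

theorem card_union_neighborFinset [DecidableRel G.Adj] :
    #(C ∪ G.neighborFinset v) = #{u ∈ C | ¬ G.Adj v u} + G.degree v := by
  have sdiff_eq : C \ G.neighborFinset v = {u ∈ C | ¬ G.Adj v u} := by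
    ext u
    simp only [mem_sdiff, mem_filter, SimpleGraph.mem_neighborFinset]
  rw [← sdiff_eq, ← G.card_neighborFinset_eq_degree, card_sdiff_add_card]

theorem setOf_forall_ne_eq_compl_usedColors [Fintype α] [DecidableEq α] (f : V → Option α) :
    {c | (∀ u ∈ C, f u ≠ some c) ∧ ∀ u, G.Adj v u → f u ≠ some c} =
      ((usedColors f (C ∪ G.neighborFinset v))ᶜ : Finset α) := by
  ext c
  simp only [Set.mem_ofPred_eq, coe_compl, Set.mem_compl_iff, mem_coe, mem_usedColors, mem_union,
    SimpleGraph.mem_neighborFinset, not_exists, not_and, or_imp, forall_and, ne_eq]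

end Neighborhood

theorem stmt2_general {V α : Type*} [DecidableEq V] [Fintype α]
    (G : SimpleGraph V) [DecidableRel G.Adj] (v : V) [Fintype (G.neighborSet v)]
    (hdeg : G.degree v < Fintype.card α) (f : V → Option α) (C : Finset V) (M : Finset (V × V))
    (hM : IsMonochromaticMatching_s2 f C M) (hpromising : #{u ∈ C | ¬ G.Adj v u} ≤ #M) :
    #{u ∈ C ∪ G.neighborFinset v | f u = none} <
      Set.ncard {c : α | (∀ u ∈ C, f u ≠ some c) ∧ ∀ u, G.Adj v u → f u ≠ some c} := by
  classical
  rw [setOf_forall_ne_eq_compl_usedColors, Set.ncard_coe_finset]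
  have hunion : IsMonochromaticMatching_s2 f (C ∪ G.neighborFinset v) M := hM.mono subset_union_left
  have used_le := hunion.card_usedColors_add_card_uncolored_add_card_le
  have card_union := card_union_neighborFinset G v C
  have card_colors := card_add_card_compl (usedColors f (C ∪ G.neighborFinset v))
  lia

/-- Let `G` have maximum degree at most `Δ`, with a partial
`(Δ+1)`-coloring `f`, let `C` be a vertex set and `M` a colorful matching in `C`.
If `v ∈ C` is promising, i.e. its anti-degree `a_v = |C \ N(v)|` satisfies
`a_v ≤ |M|`, then `|Ψ_C ∩ Ψ_v| ≥ |Ĉ|`, where `Ĉ` is the set of uncolored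
vertices of `C`. -/
theorem stmt2 {V : Type*} [Fintype V] [DecidableEq V] (G : SimpleGraph V)
    [DecidableRel G.Adj] (Δ : ℕ) (hdeg : ∀ v, G.degree v ≤ Δ)
    (f : V → Option (Fin (Δ + 1)))
    (hf : ∀ u v, G.Adj u v → ∀ c, f u = some c → f v ≠ some c)
    (C : Finset V) (M : Finset (V × V))
    (hM : ∀ p ∈ M, p.1 ≠ p.2 ∧ ¬ G.Adj p.1 p.2 ∧ p.1 ∈ C ∧ p.2 ∈ C ∧
      ∃ c, f p.1 = some c ∧ f p.2 = some c)
    (hdisj : ∀ p ∈ M, ∀ q ∈ M, p ≠ q →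
      p.1 ≠ q.1 ∧ p.1 ≠ q.2 ∧ p.2 ≠ q.1 ∧ p.2 ≠ q.2)
    (hcol : ∀ p ∈ M, ∀ q ∈ M, p ≠ q → f p.1 ≠ f q.1)
    (v : V) (hv : v ∈ C)
    (hpromising : (C.filter (fun u => ¬ G.Adj v u)).card ≤ M.card) :
    (C.filter (fun u => f u = none)).card ≤
      Set.ncard {c : Fin (Δ + 1) |
        (∀ u ∈ C, f u ≠ some c) ∧ (∀ u, G.Adj v u → f u ≠ some c)} := by
  have hmatching : IsMonochromaticMatching_s2 f C M :=
    ⟨fun p hp => (hM p hp).1, fun p hp => (hM p hp).2.2.1, fun p hp => (hM p hp).2.2.2.1,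
      fun p hp => (hM p hp).2.2.2.2, hdisj⟩
  have hdeg_lt : G.degree v < Fintype.card (Fin (Δ + 1)) := by
    simpa only [Fintype.card_fin] using Nat.lt_succ_of_le (hdeg v)
  exact (card_le_card (filter_subset_filter _ subset_union_left)).trans
    (stmt2_general G v hdeg_lt f C M hmatching hpromising).le
end

section
/- Let Δ ≥ 1 be an integer, 0 < ε ≤ 1/15, η > 0 and L_max ≥ 0 reals with L_max/η ≤ ε. Let G be a graph with a partial (Δ+1)-coloring and let C be a set of vertices with |C| ≥ (1−ε)Δ such that every v ∈ C is uncolored, has at most εΔ colored neighbors outside C, and has at most Δ/η uncolored neighbors outside C. Assign to every uncolored vertex w ∉ C a list L(w) ⊆ {1,…,Δ+1} with |L(w)| ≤ L_max. For an anti-edge e = {u,v} (u,v ∈ C distinct and non-adjacent in G), let avail(e) be the number of colors c ∈ {1,…,Δ+1} such that c is not the color of any colored neighbor outside C of u or v, and c does not belong to the list L(w) of any uncolored neighbor w outside C of u or v. Let F be the set of all anti-edges of C and let d̄_C = 2|F|/|C|. Then Σ_{e∈F} avail(e) ≥ d̄_C · Δ²/3. -/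
/-!
A color is unavailable for a pair `{u, v}` of vertices of `C` only if it is blocked at `u` or at
`v`. At a vertex of `C`, each colored outside neighbor blocks one color and each uncolored one
blocks its list, so at most `εΔ + (Δ/η) L_max ≤ 2εΔ` colors are blocked. Hence every single pair
keeps `(1 - 4ε)Δ` available colors. Multiplying by `1 ≥ (1 - ε)Δ / |C|` turns the resulting bound
`|F| (1 - 4ε) Δ` into a multiple of `(2|F| / |C|) Δ²`, and `(1 - 4ε)(1 - ε) / 2 ≥ 1/3` for
`ε ≤ 1/15`.
-/

section OutsideNeighbors

variable {V K : Type*} [DecidableEq V] (G : SimpleGraph V) (C : Finset V) (f : V → Option K)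

/-- The colored neighbors of `v` outside `C`; `f w = none` encodes that `w` is uncolored. -/
def coloredOutsideNeighbors [G.LocallyFinite] (v : V) : Finset V :=
  {w ∈ G.neighborFinset v | w ∉ C ∧ f w ≠ none}

/-- The uncolored neighbors of `v` outside `C`. -/
def uncoloredOutsideNeighbors [G.LocallyFinite] (v : V) : Finset V :=
  {w ∈ G.neighborFinset v | w ∉ C ∧ f w = none}

theorem coloredOutsideNeighbors_eq_filter_univ [Fintype V] [DecidableRel G.Adj] (v : V) :
    coloredOutsideNeighbors G C f v =
      Finset.univ.filter (fun w => G.Adj v w ∧ w ∉ C ∧ f w ≠ none) := by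
  ext w
  simp [coloredOutsideNeighbors]

theorem uncoloredOutsideNeighbors_eq_filter_univ [Fintype V] [DecidableRel G.Adj] (v : V) :
    uncoloredOutsideNeighbors G C f v =
      Finset.univ.filter (fun w => G.Adj v w ∧ w ∉ C ∧ f w = none) := by
  ext w
  simp [uncoloredOutsideNeighbors]

end OutsideNeighbors

section AvailableColors

variable {V K : Type*} (G : SimpleGraph V) (C : Finset V) (f : V → Option K) (L : V → Finset K)

/-- The colors available for the pair `e`: those that are neither the color of a colored neighbor
outside `C` of an endpoint of `e`, nor in the list of an uncolored one. -/
def availableColors (e : Sym2 V) : Set K :=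
  {c | ∀ v ∈ e, ∀ w, w ∉ C → G.Adj v w → f w ≠ some c ∧ (f w = none → c ∉ L w)}

theorem availableColors_mk (u v : V) :
    availableColors G C f L s(u, v) =
      {c | ∀ w, w ∉ C → (G.Adj u w ∨ G.Adj v w) → f w ≠ some c ∧ (f w = none → c ∉ L w)} := by
  ext c
  simp only [availableColors, Sym2.mem_iff, Set.mem_ofPred_eq]
  grind

variable [DecidableEq V] [DecidableEq K] [G.LocallyFinite]

/-- The colors that the neighbors of `v` outside `C` make unavailable at `v`: the colors of the
colored ones and the lists of the uncolored ones. -/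
def blockedColors (v : V) : Finset K :=
  (coloredOutsideNeighbors G C f v).biUnion (fun w => (f w).toFinset) ∪
    (uncoloredOutsideNeighbors G C f v).biUnion L

variable {G C f L}

theorem mem_blockedColors {v : V} {c : K} :
    c ∈ blockedColors G C f L v ↔
      ∃ w, w ∉ C ∧ G.Adj v w ∧ (f w = some c ∨ f w = none ∧ c ∈ L w) := by
  simp only [blockedColors, coloredOutsideNeighbors, uncoloredOutsideNeighbors, Finset.mem_union,
    Finset.mem_biUnion, Finset.mem_filter, SimpleGraph.mem_neighborFinset, Option.mem_toFinset,
    Option.mem_def]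
  grind

theorem mem_availableColors_iff_notMem_blockedColors {e : Sym2 V} {c : K} :
    c ∈ availableColors G C f L e ↔ ∀ v ∈ e, c ∉ blockedColors G C f L v := by
  simp only [availableColors, mem_blockedColors, Set.mem_ofPred_eq]
  grind

theorem card_blockedColors_le {v : V} {ℓ : ℝ}
    (hL : ∀ w ∈ uncoloredOutsideNeighbors G C f v, ((L w).card : ℝ) ≤ ℓ) :
    ((blockedColors G C f L v).card : ℝ) ≤
      (coloredOutsideNeighbors G C f v).card + (uncoloredOutsideNeighbors G C f v).card * ℓ := by
  have colors_le : ((coloredOutsideNeighbors G C f v).biUnion fun w => (f w).toFinset).card ≤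
      (coloredOutsideNeighbors G C f v).card := by
    simpa using Finset.card_biUnion_le_card_mul _ _ 1 fun w _ => by cases f w <;> simp
  have lists_le : (((uncoloredOutsideNeighbors G C f v).biUnion L).card : ℝ) ≤
      (uncoloredOutsideNeighbors G C f v).card * ℓ := by
    calc (((uncoloredOutsideNeighbors G C f v).biUnion L).card : ℝ)
        ≤ ∑ w ∈ uncoloredOutsideNeighbors G C f v, ((L w).card : ℝ) :=
          mod_cast Finset.card_biUnion_le
      _ ≤ (uncoloredOutsideNeighbors G C f v).card * ℓ := by
          simpa only [nsmul_eq_mul] using Finset.sum_le_card_nsmul _ _ _ hL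
  calc ((blockedColors G C f L v).card : ℝ)
      ≤ ((coloredOutsideNeighbors G C f v).biUnion fun w => (f w).toFinset).card +
          ((uncoloredOutsideNeighbors G C f v).biUnion L).card :=
        mod_cast Finset.card_union_le _ _
    _ ≤ _ := add_le_add (mod_cast colors_le) lists_le

theorem card_le_card_blockedColors_add_ncard_availableColors [Fintype K] (u v : V) :
    Fintype.card K ≤ (blockedColors G C f L u).card + (blockedColors G C f L v).card +
      (availableColors G C f L s(u, v)).ncard := by
  have available_eq : availableColors G C f L s(u, v) =
      ((blockedColors G C f L u ∪ blockedColors G C f L v)ᶜ : Finset K) := by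
    ext c
    simp [mem_availableColors_iff_notMem_blockedColors]
  rw [available_eq, Set.ncard_coe_finset, ← Finset.card_add_card_compl]
  gcongr
  exact Finset.card_union_le _ _

theorem sub_two_mul_le_ncard_availableColors [Fintype K] {e : Sym2 V} {b : ℝ}
    (hb : ∀ v ∈ e, ((blockedColors G C f L v).card : ℝ) ≤ b) :
    Fintype.card K - 2 * b ≤ ((availableColors G C f L e).ncard : ℝ) := by
  induction e with | _ u v
  have blocked_u := hb u (Sym2.mem_mk_left u v)
  have blocked_v := hb v (Sym2.mem_mk_right u v)
  have card_le : (Fintype.card K : ℝ) ≤ (blockedColors G C f L u).card +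
      (blockedColors G C f L v).card + (availableColors G C f L s(u, v)).ncard :=
    mod_cast card_le_card_blockedColors_add_ncard_availableColors u v
  linarith

end AvailableColors

theorem stmt5_general {V K : Type*} [DecidableEq V] [Fintype K] {G : SimpleGraph V}
    [G.LocallyFinite] {C : Finset V} {f : V → Option K} {L : V → Finset K}
    {Δ ε d ℓ : ℝ} (hΔ : 0 ≤ Δ) (hK : Δ ≤ Fintype.card K) (hε : ε ≤ 1 / 4)
    (hℓ : 0 ≤ ℓ) (hdℓ : d * ℓ ≤ ε * Δ) (hC : (1 - ε) * Δ ≤ C.card)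
    (hcolored : ∀ v ∈ C, ((coloredOutsideNeighbors G C f v).card : ℝ) ≤ ε * Δ)
    (huncolored : ∀ v ∈ C, ((uncoloredOutsideNeighbors G C f v).card : ℝ) ≤ d)
    (hL : ∀ w, w ∉ C → f w = none → ((L w).card : ℝ) ≤ ℓ)
    {F : Finset (Sym2 V)} (hF : F ⊆ C.sym2) :
    2 * F.card / C.card * ((1 - 4 * ε) * (1 - ε) / 2 * Δ ^ 2) ≤
      ∑ e ∈ F, ((availableColors G C f L e).ncard : ℝ) := by
  classical
  have blocked_le : ∀ v ∈ C, ((blockedColors G C f L v).card : ℝ) ≤ 2 * ε * Δ := by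
    intro v hv
    calc ((blockedColors G C f L v).card : ℝ)
        ≤ (coloredOutsideNeighbors G C f v).card +
            (uncoloredOutsideNeighbors G C f v).card * ℓ :=
          card_blockedColors_le fun w hw =>
            hL w (Finset.mem_filter.mp hw).2.1 (Finset.mem_filter.mp hw).2.2
      _ ≤ ε * Δ + d * ℓ := by gcongr; exacts [hcolored v hv, huncolored v hv]
      _ ≤ 2 * ε * Δ := by linarith
  have available_ge : ∀ e ∈ F, (1 - 4 * ε) * Δ ≤ ((availableColors G C f L e).ncard : ℝ) := by
    intro e he
    have := sub_two_mul_le_ncard_availableColors fun v hv =>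
      blocked_le v (Finset.mem_sym2_iff.mp (hF he) v hv)
    linarith
  have pair_bound_nonneg : 0 ≤ (1 - 4 * ε) * Δ := mul_nonneg (by linarith) hΔ
  calc 2 * F.card / C.card * ((1 - 4 * ε) * (1 - ε) / 2 * Δ ^ 2)
      = F.card * ((1 - 4 * ε) * Δ) * ((1 - ε) * Δ / C.card) := by ring
    _ ≤ F.card * ((1 - 4 * ε) * Δ) :=
        mul_le_of_le_one_right (by positivity) (div_le_one_of_le₀ hC (by positivity))
    _ ≤ ∑ e ∈ F, ((availableColors G C f L e).ncard : ℝ) := by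
        simpa only [nsmul_eq_mul] using Finset.card_nsmul_le_sum F _ _ available_ge

/-- Let `Δ ≥ 1`, `0 < ε ≤ 1/15`, `η > 0`, `L_max ≥ 0` with
`L_max/η ≤ ε`. Let `G` carry a partial `(Δ+1)`-coloring `f`, and let `C` be a
vertex set with `|C| ≥ (1-ε)Δ` all of whose vertices are uncolored, each having
at most `εΔ` colored neighbors outside `C` and at most `Δ/η` uncolored
neighbors outside `C`. Each uncolored vertex `w ∉ C` has a list `L w` of at most
`L_max` colors. For an anti-edge `e = {u,v}` of `C`, `avail e` counts the colors
that are neither the color of a colored neighbor outside `C` of `u` or `v`, nor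
in the list of an uncolored neighbor outside `C` of `u` or `v`. Then, with `F`
the set of all anti-edges of `C` and `d̄_C = 2|F|/|C|`,
`Σ_{e∈F} avail e ≥ d̄_C · Δ²/3`. -/
theorem stmt5 {V : Type*} [Fintype V] [DecidableEq V] (G : SimpleGraph V)
    [DecidableRel G.Adj] (Δ : ℕ) (hΔ : 1 ≤ Δ) (ε η Lmax : ℝ)
    (hε0 : 0 < ε) (hε1 : ε ≤ 1 / 15) (hη : 0 < η) (hL0 : 0 ≤ Lmax)
    (hLη : Lmax / η ≤ ε)
    (f : V → Option (Fin (Δ + 1)))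
    (hf : ∀ u v, G.Adj u v → ∀ c, f u = some c → f v ≠ some c)
    (C : Finset V)
    (hCcard : (1 - ε) * Δ ≤ (C.card : ℝ))
    (hCuncol : ∀ v ∈ C, f v = none)
    (hext1 : ∀ v ∈ C,
      (((Finset.univ.filter (fun w => G.Adj v w ∧ w ∉ C ∧ f w ≠ none)).card : ℝ)) ≤ ε * Δ)
    (hext2 : ∀ v ∈ C,
      (((Finset.univ.filter (fun w => G.Adj v w ∧ w ∉ C ∧ f w = none)).card : ℝ)) ≤ (Δ : ℝ) / η)
    (L : V → Finset (Fin (Δ + 1)))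
    (hL : ∀ w, w ∉ C → f w = none → ((L w).card : ℝ) ≤ Lmax)
    (avail : Sym2 V → ℕ)
    (havail : ∀ u v : V, avail s(u, v) =
      Set.ncard {c : Fin (Δ + 1) | ∀ w, w ∉ C → (G.Adj u w ∨ G.Adj v w) →
        f w ≠ some c ∧ (f w = none → c ∉ L w)})
    (F : Finset (Sym2 V))
    (hF : ∀ e : Sym2 V, e ∈ F ↔ (¬ e.IsDiag ∧ e ∉ G.edgeSet ∧ ∀ u ∈ e, u ∈ C)) :
    (2 * (F.card : ℝ) / (C.card : ℝ)) * (Δ : ℝ) ^ 2 / 3 ≤ ∑ e ∈ F, (avail e : ℝ) := by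
  have avail_eq (e : Sym2 V) : avail e = (availableColors G C f L e).ncard := by
    induction e with | _ u v => rw [havail, availableColors_mk]
  simp only [← coloredOutsideNeighbors_eq_filter_univ] at hext1
  simp only [← uncoloredOutsideNeighbors_eq_filter_univ] at hext2
  have blocked_by_lists : (Δ : ℝ) / η * Lmax ≤ ε * Δ := by
    calc (Δ : ℝ) / η * Lmax = Lmax / η * Δ := by ring
      _ ≤ ε * Δ := by gcongr
  have constant_ge : (1 : ℝ) / 3 ≤ (1 - 4 * ε) * (1 - ε) / 2 := by nlinarith
  calc 2 * (F.card : ℝ) / C.card * (Δ : ℝ) ^ 2 / 3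
      = 2 * F.card / C.card * (1 / 3 * (Δ : ℝ) ^ 2) := by ring
    _ ≤ 2 * F.card / C.card * ((1 - 4 * ε) * (1 - ε) / 2 * (Δ : ℝ) ^ 2) := by gcongr
    _ ≤ ∑ e ∈ F, ((availableColors G C f L e).ncard : ℝ) :=
        stmt5_general Δ.cast_nonneg (by simp) (by linarith) hL0 blocked_by_lists hCcard
          hext1 hext2 hL fun e he => Finset.mem_sym2_iff.mpr ((hF e).mp he).2.2
    _ = ∑ e ∈ F, (avail e : ℝ) := by simp only [avail_eq]
end

section
/- Let G be a finite simple graph on vertex set C with n = |C| ≥ 2, and let c > 0 be a real number. Suppose that for every nonempty subset S ⊆ C with |S| ≤ 3n/4 we have |N(S) ∖ S| ≥ c·|S|, where N(S) is the set of vertices adjacent to at least one vertex of S. Then G is connected, and any two vertices of G are at graph distance at most 2·(⌈log n / log(1+c)⌉ + 1). -/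
open scoped Classical

/-!
As long as a closed ball has at most `n / 2` vertices, expansion multiplies its size by at least
`1 + c` when the radius grows by one. Since `(1 + c) ^ k ≥ n` for `k = ⌈log n / log (1 + c)⌉`, every
ball of radius `k` has more than `n / 2` vertices, so any two of them meet, and all distances are
at most `2 * k`.
-/

lemma le_pow_natCeil_log_div_log {a x : ℝ} (ha : 1 < a) (hx : 0 < x) :
    x ≤ a ^ ⌈Real.log x / Real.log a⌉₊ := by
  rw [Real.le_pow_iff_log_le hx (by positivity), ← div_le_iff₀ (Real.log_pos ha)]
  exact Nat.le_ceil _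

section

variable {V : Type*} [Fintype V] {G : SimpleGraph V} {c t : ℝ}

/-- The outer vertex boundary `N(S) \ S` of a set of vertices `S`. -/
noncomputable def outerBoundary (G : SimpleGraph V) (S : Finset V) : Finset V :=
  Finset.univ.filter (fun v => ∃ u ∈ S, G.Adj u v) \ S

/-- Vertex expansion with factor `c`, required of the nonempty sets with at most `t` vertices. -/
def IsVertexExpander (G : SimpleGraph V) (c t : ℝ) : Prop :=
  ∀ S : Finset V, S.Nonempty → (S.card : ℝ) ≤ t → c * S.card ≤ (outerBoundary G S).card

/-- The closed ball of radius `k` about `u` in the extended graph metric, as a finset;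
`SimpleGraph.ball` is the open ball, as a set. -/
noncomputable def closedBallFinset (G : SimpleGraph V) (u : V) (k : ℕ) : Finset V :=
  {v | G.edist u v ≤ k}

@[simp]
lemma mem_closedBallFinset {u v : V} {k : ℕ} :
    v ∈ closedBallFinset G u k ↔ G.edist u v ≤ k := by
  simp [closedBallFinset]

lemma closedBallFinset_nonempty (u : V) (k : ℕ) : (closedBallFinset G u k).Nonempty :=
  ⟨u, by simp⟩

lemma closedBallFinset_union_outerBoundary_subset (u : V) (k : ℕ) :
    closedBallFinset G u k ∪ outerBoundary G (closedBallFinset G u k) ⊆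
      closedBallFinset G u (k + 1) := by
  intro v hv
  rw [outerBoundary, Finset.union_sdiff_self_eq_union, Finset.mem_union, Finset.mem_filter] at hv
  rw [mem_closedBallFinset, Nat.cast_add, Nat.cast_one]
  obtain hv | ⟨-, w, hw, hwv⟩ := hv
  · exact (mem_closedBallFinset.1 hv).trans le_self_add
  · calc
      G.edist u v ≤ G.edist u w + G.edist w v := G.edist_triangle
      _ ≤ k + 1 :=
        add_le_add (mem_closedBallFinset.1 hw) (SimpleGraph.edist_eq_one_iff_adj.2 hwv).le

lemma card_closedBallFinset_add_card_outerBoundary_le (u : V) (k : ℕ) :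
    (closedBallFinset G u k).card + (outerBoundary G (closedBallFinset G u k)).card ≤
      (closedBallFinset G u (k + 1)).card := by
  have hdisj : Disjoint (closedBallFinset G u k) (outerBoundary G (closedBallFinset G u k)) :=
    Finset.disjoint_sdiff
  rw [← Finset.card_union_of_disjoint hdisj]
  exact Finset.card_le_card (closedBallFinset_union_outerBoundary_subset u k)

lemma edist_le_add_of_card_lt_card_add_card {u v : V} {j k : ℕ}
    (h : Fintype.card V < (closedBallFinset G u j).card + (closedBallFinset G v k).card) :
    G.edist u v ≤ j + k := by
  obtain ⟨w, hw⟩ := Finset.inter_nonempty_of_card_lt_card_add_card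
    (Finset.subset_univ _) (Finset.subset_univ _) h
  rw [Finset.mem_inter, mem_closedBallFinset, mem_closedBallFinset] at hw
  calc
    G.edist u v ≤ G.edist u w + G.edist w v := G.edist_triangle
    _ ≤ j + k := add_le_add hw.1 (SimpleGraph.edist_comm.trans_le hw.2)

namespace IsVertexExpander

lemma lt_card_closedBallFinset_or_pow_le (h : IsVertexExpander G c t) (hc : 0 ≤ c)
    (u : V) (k : ℕ) :
    t < (closedBallFinset G u k).card ∨ (1 + c) ^ k ≤ (closedBallFinset G u k).card := by
  induction k with
  | zero => exact .inr (by simpa using closedBallFinset_nonempty u 0)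
  | succ k ih =>
    have hstep : ((closedBallFinset G u k).card : ℝ) +
        (outerBoundary G (closedBallFinset G u k)).card ≤ (closedBallFinset G u (k + 1)).card :=
      mod_cast card_closedBallFinset_add_card_outerBoundary_le u k
    obtain hlarge | hsmall := lt_or_ge t ((closedBallFinset G u k).card : ℝ)
    · exact .inl (hlarge.trans_le ((le_add_of_nonneg_right (Nat.cast_nonneg _)).trans hstep))
    · right
      calc
        (1 + c) ^ (k + 1) = (1 + c) * (1 + c) ^ k := pow_succ' _ _
        _ ≤ (1 + c) * (closedBallFinset G u k).card := by
          gcongr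
          exact ih.resolve_left hsmall.not_gt
        _ = (closedBallFinset G u k).card + c * (closedBallFinset G u k).card := by ring
        _ ≤ (closedBallFinset G u k).card + (outerBoundary G (closedBallFinset G u k)).card := by
          gcongr
          exact h _ (closedBallFinset_nonempty u k) hsmall
        _ ≤ (closedBallFinset G u (k + 1)).card := hstep

lemma ediam_le_two_mul (h : IsVertexExpander G c (Fintype.card V / 2)) (hc : 0 ≤ c) {k : ℕ}
    (hk : (Fintype.card V : ℝ) / 2 < (1 + c) ^ k) : G.ediam ≤ 2 * k := by
  have hball (u : V) : (Fintype.card V : ℝ) / 2 < (closedBallFinset G u k).card :=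
    (h.lt_card_closedBallFinset_or_pow_le hc u k).elim id hk.trans_le
  refine SimpleGraph.ediam_le_of_edist_le fun u v => ?_
  rw [two_mul]
  apply edist_le_add_of_card_lt_card_add_card
  have hsum : (Fintype.card V : ℝ) <
      (closedBallFinset G u k).card + (closedBallFinset G v k).card := by
    linarith [hball u, hball v]
  exact_mod_cast hsum

end IsVertexExpander

theorem stmt6_general [Nonempty V] (hc : 0 < c)
    (h : IsVertexExpander G c (Fintype.card V / 2)) :
    G.Connected ∧ ∀ u v : V,
      (G.dist u v : ℝ) ≤ 2 * ⌈Real.log (Fintype.card V) / Real.log (1 + c)⌉ := by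
  have hcard : (0 : ℝ) < Fintype.card V := mod_cast Fintype.card_pos
  have hratio : 0 ≤ Real.log (Fintype.card V) / Real.log (1 + c) :=
    div_nonneg (Real.log_natCast_nonneg _) (Real.log_nonneg (by linarith))
  rw [← natCast_ceil_eq_intCast_ceil hratio]
  set k := ⌈Real.log (Fintype.card V) / Real.log (1 + c)⌉₊
  have hdiam : G.ediam ≤ (2 * k : ℕ) := mod_cast h.ediam_le_two_mul hc.le
    ((half_lt_self hcard).trans_le (le_pow_natCeil_log_div_log (by linarith) hcard))
  have hfinite : G.ediam ≠ ⊤ := ne_top_of_le_ne_top (ENat.natCast_ne_top _) hdiam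
  have hdiam' : G.diam ≤ 2 * k := ENat.toNat_le_of_le_natCast hdiam
  exact ⟨SimpleGraph.connected_of_ediam_ne_top hfinite, fun u v =>
    mod_cast (SimpleGraph.dist_le_diam hfinite).trans hdiam'⟩

end

/-- Let `G` be a finite simple graph on `n ≥ 2` vertices and
`c > 0` such that every nonempty `S` with `|S| ≤ 3n/4` satisfies
`|N(S) \ S| ≥ c|S|`. Then `G` is connected and any two vertices are at graph
distance at most `2·(⌈log n / log(1+c)⌉ + 1)`. -/
theorem stmt6 {V : Type*} [Fintype V] (G : SimpleGraph V) (c : ℝ) (hc : 0 < c)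
    (hn : 2 ≤ Fintype.card V)
    (hexp : ∀ S : Finset V, S.Nonempty → (S.card : ℝ) ≤ 3 * (Fintype.card V : ℝ) / 4 →
      c * (S.card : ℝ) ≤
        ((Finset.univ.filter (fun v => ∃ u ∈ S, G.Adj u v) \ S).card : ℝ)) :
    G.Connected ∧ ∀ u v : V,
      (G.dist u v : ℝ) ≤
        2 * ((⌈Real.log (Fintype.card V) / Real.log (1 + c)⌉ : ℝ) + 1) := by
  have : Nonempty V := Fintype.card_pos_iff.1 (by lia)
  have hexpander : IsVertexExpander G c (Fintype.card V / 2) :=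
    fun S hS hcard => hexp S hS (by linarith [S.card.cast_nonneg (α := ℝ)])
  obtain ⟨hconnected, hdist⟩ := stmt6_general hc hexpander
  exact ⟨hconnected, fun u v => (hdist u v).trans (by linarith)⟩
end

section
/- Let n ≥ 1 be an integer, let α be a type equipped with a probability distribution μ, let I be a finite nonempty index set, and for each i ∈ I let bad_i ⊆ α be an event with μ(bad_i) ≤ 1/n. Then for every integer t with t > 3·n·ln|I|, there exist seeds s₁, …, s_t ∈ α such that for every i ∈ I, the number of indices j ∈ {1,…,t} with s_j ∈ bad_i is at most 2t/n. -/
open MeasureTheory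
open scoped Classical

/-!
Draw the seeds independently from `μ` and let `N i` count those that fall into `bad i`. The
expectation of `∑ i, b ^ N i` is `∑ i, (1 + (b - 1) * μ (bad i)) ^ t`, so some choice of seeds does
not exceed it. For that choice each single term `b ^ N i` is at most
`|I| * exp (t * (b - 1) * p)`, where `p` bounds every `μ (bad i)`. Taking `b = 2` and logarithms
gives `N i * log 2 ≤ log |I| + t * p ≤ (4 / 3) * t * p`, and `2 / 3 ≤ log 2`.
-/

theorem exists_sum_prod_le_sum_prod_integral {ι κ : Type*} [Fintype ι] {X : ι → Type*}
    [∀ j, MeasurableSpace (X j)] (μ : ∀ j, Measure (X j)) [∀ j, IsProbabilityMeasure (μ j)]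
    (S : Finset κ) (f : κ → ∀ j, X j → ℝ) (hf : ∀ k ∈ S, ∀ j, Integrable (f k j) (μ j)) :
    ∃ x : ∀ j, X j, ∑ k ∈ S, ∏ j, f k j (x j) ≤ ∑ k ∈ S, ∏ j, ∫ y, f k j y ∂μ j := by
  have integrable_prod : ∀ k ∈ S,
      Integrable (fun x : ∀ j, X j => ∏ j, f k j (x j)) (Measure.pi μ) :=
    fun k hk => Integrable.fintype_prod_dep (hf k hk)
  obtain ⟨x, hx⟩ := exists_le_integral (integrable_finsetSum S integrable_prod)
  refine ⟨x, hx.trans_eq ?_⟩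
  rw [integral_finsetSum S integrable_prod]
  exact Finset.sum_congr rfl fun k _ => integral_fintype_prod_eq_prod (f k)

theorem one_add_mul_pow_le_exp {c q p : ℝ} (hc : 0 ≤ c) (hq : 0 ≤ q) (hqp : q ≤ p) (m : ℕ) :
    (1 + c * q) ^ m ≤ Real.exp (m * (c * p)) := by
  calc (1 + c * q) ^ m ≤ Real.exp (c * p) ^ m := by
        refine pow_le_pow_left₀ (add_nonneg zero_le_one (mul_nonneg hc hq)) ?_ m
        linarith [mul_le_mul_of_nonneg_left hqp hc, Real.add_one_le_exp (c * p)]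
    _ = Real.exp (m * (c * p)) := (Real.exp_nat_mul _ m).symm

theorem integrable_ite_mem_one {α : Type*} [MeasurableSpace α] (μ : Measure α) [IsFiniteMeasure μ]
    {A : Set α} (hA : MeasurableSet A) (b : ℝ) :
    Integrable (fun a => if a ∈ A then b else 1) μ :=
  Integrable.piecewise hA (integrable_const b).integrableOn (integrable_const 1).integrableOn

section

variable {α : Type*} [MeasurableSpace α] (μ : Measure α) [IsProbabilityMeasure μ]

theorem integral_ite_mem_one {A : Set α} (hA : MeasurableSet A) (b : ℝ) :
    ∫ a, (if a ∈ A then b else 1) ∂μ = 1 + (b - 1) * μ.real A := by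
  calc ∫ a, (if a ∈ A then b else 1) ∂μ
      = (∫ _ in A, b ∂μ) + ∫ _ in Aᶜ, (1 : ℝ) ∂μ :=
        integral_piecewise hA (integrable_const b).integrableOn (integrable_const 1).integrableOn
    _ = μ.real A * b + (1 - μ.real A) := by
        simp only [setIntegral_const, smul_eq_mul, mul_one, probReal_compl_eq_one_sub hA]
    _ = 1 + (b - 1) * μ.real A := by ring

variable {I ι : Type*} [Fintype I] [Fintype ι]

theorem exists_sum_pow_card_mem_le {A : I → Set α} (hA : ∀ i, MeasurableSet (A i)) (b : ℝ) :
    ∃ s : ι → α, ∑ i, b ^ (Finset.univ.filter fun j => s j ∈ A i).card ≤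
      ∑ i, (1 + (b - 1) * μ.real (A i)) ^ Fintype.card ι := by
  obtain ⟨s, hs⟩ := exists_sum_prod_le_sum_prod_integral (fun _ : ι => μ) Finset.univ
    (fun i _ a => if a ∈ A i then b else 1) fun i _ _ => integrable_ite_mem_one μ (hA i) b
  refine ⟨s, ?_⟩
  simpa only [integral_ite_mem_one μ (hA _), Finset.prod_ite, Finset.prod_const, one_pow, mul_one,
    Finset.card_univ] using hs

theorem exists_forall_pow_card_mem_le {A : I → Set α} {p b : ℝ} (hp : ∀ i, μ.real (A i) ≤ p)
    (hb : 1 ≤ b) :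
    ∃ s : ι → α, ∀ i, b ^ (Finset.univ.filter fun j => s j ∈ A i).card ≤
      Fintype.card I * Real.exp (Fintype.card ι * ((b - 1) * p)) := by
  obtain ⟨s, hs⟩ := exists_sum_pow_card_mem_le (ι := ι) μ
    (fun i => measurableSet_toMeasurable μ (A i)) b
  have hp_hull (i : I) : μ.real (toMeasurable μ (A i)) ≤ p := by
    simpa only [Measure.real, measure_toMeasurable] using hp i
  refine ⟨s, fun i => ?_⟩
  calc b ^ (Finset.univ.filter fun j => s j ∈ A i).card
      ≤ b ^ (Finset.univ.filter fun j => s j ∈ toMeasurable μ (A i)).card := by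
        gcongr
        exact subset_toMeasurable μ (A i)
    _ ≤ ∑ k, b ^ (Finset.univ.filter fun j => s j ∈ toMeasurable μ (A k)).card :=
        Finset.single_le_sum
          (f := fun k => b ^ (Finset.univ.filter fun j => s j ∈ toMeasurable μ (A k)).card)
          (fun _ _ => by positivity) (Finset.mem_univ i)
    _ ≤ ∑ k, (1 + (b - 1) * μ.real (toMeasurable μ (A k))) ^ Fintype.card ι := hs
    _ ≤ ∑ _k : I, Real.exp (Fintype.card ι * ((b - 1) * p)) :=
        Finset.sum_le_sum fun k _ =>
          one_add_mul_pow_le_exp (sub_nonneg.2 hb) measureReal_nonneg (hp_hull k) _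
    _ = Fintype.card I * Real.exp (Fintype.card ι * ((b - 1) * p)) := by
        rw [Finset.sum_const, Finset.card_univ, nsmul_eq_mul]

theorem exists_forall_card_mem_mul_log_le {A : I → Set α} {p b : ℝ}
    (hp : ∀ i, μ.real (A i) ≤ p) (hb : 1 ≤ b) :
    ∃ s : ι → α, ∀ i, (Finset.univ.filter fun j => s j ∈ A i).card * Real.log b ≤
      Real.log (Fintype.card I) + Fintype.card ι * ((b - 1) * p) := by
  obtain ⟨s, hs⟩ := exists_forall_pow_card_mem_le (ι := ι) μ hp hb
  refine ⟨s, fun i => ?_⟩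
  have card_ne_zero : (Fintype.card I : ℝ) ≠ 0 :=
    Nat.cast_ne_zero.2 (Fintype.card_pos_iff.2 ⟨i⟩).ne'
  rw [← Real.log_pow, ← Real.log_exp (Fintype.card ι * ((b - 1) * p)),
    ← Real.log_mul card_ne_zero (Real.exp_pos _).ne']
  exact Real.log_le_log (by positivity) (hs i)

end

theorem stmt8_general {α : Type*} [MeasurableSpace α] (μ : Measure α) [IsProbabilityMeasure μ]
    {I ι : Type*} [Fintype I] [Fintype ι] {A : I → Set α} {p : ℝ}
    (hp : ∀ i, μ.real (A i) ≤ p)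
    (hcard : 3 * Real.log (Fintype.card I) ≤ Fintype.card ι * p) :
    ∃ s : ι → α, ∀ i,
      ((Finset.univ.filter fun j => s j ∈ A i).card : ℝ) ≤ 2 * (Fintype.card ι * p) := by
  obtain ⟨s, hs⟩ := exists_forall_card_mem_mul_log_le (ι := ι) μ hp one_le_two
  refine ⟨s, fun i => ?_⟩
  have two_thirds_le_log_two : 2 / 3 ≤ Real.log 2 := by linarith [Real.log_two_gt_d9]
  have card_mul_le : (Finset.univ.filter fun j => s j ∈ A i).card * (2 / 3 : ℝ) ≤
      4 / 3 * (Fintype.card ι * p) :=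
    calc (Finset.univ.filter fun j => s j ∈ A i).card * (2 / 3 : ℝ)
        ≤ (Finset.univ.filter fun j => s j ∈ A i).card * Real.log 2 := by gcongr
      _ ≤ Real.log (Fintype.card I) + Fintype.card ι * ((2 - 1) * p) := hs i
      _ ≤ 4 / 3 * (Fintype.card ι * p) := by linarith
  linarith

/-- Let `n ≥ 1`, `μ` a probability measure on a type `α`, `I` a
finite nonempty index set, and `bad i` measurable events with `μ (bad i) ≤ 1/n`.
Then for every integer `t > 3·n·ln|I|` there exist seeds `s₁, …, s_t ∈ α` such
that for every `i ∈ I`, at most `2t/n` of the seeds lie in `bad i`. -/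
theorem stmt8 {α : Type*} [MeasurableSpace α] (μ : Measure α)
    [IsProbabilityMeasure μ] (n : ℕ) (hn : 1 ≤ n)
    {I : Type*} [Fintype I] [Nonempty I] (bad : I → Set α)
    (hmeas : ∀ i, MeasurableSet (bad i))
    (hbad : ∀ i, μ (bad i) ≤ 1 / (n : ENNReal))
    (t : ℕ) (ht : 3 * (n : ℝ) * Real.log (Fintype.card I) < (t : ℝ)) :
    ∃ s : Fin t → α, ∀ i : I,
      (((Finset.univ.filter (fun j : Fin t => s j ∈ bad i)).card : ℝ)) ≤
        2 * (t : ℝ) / (n : ℝ) := by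
  have hn₀ : (0 : ℝ) < n := Nat.cast_pos.2 hn
  have hp (i : I) : μ.real (bad i) ≤ (n : ℝ)⁻¹ := by
    simpa [Measure.real] using
      ENNReal.toReal_mono (by simpa using Nat.one_le_iff_ne_zero.1 hn) (hbad i)
  have hcard : 3 * Real.log (Fintype.card I) ≤ Fintype.card (Fin t) * (n : ℝ)⁻¹ := by
    rw [Fintype.card_fin, ← div_eq_mul_inv, le_div_iff₀ hn₀]
    linarith
  simpa only [Fintype.card_fin, ← div_eq_mul_inv, ← mul_div_assoc] using stmt8_general μ hp hcard
end
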